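/- Let N ≥ 2. The set of f ∈ 𝒪(𝔹_N) such that for every complex affine line L ⊆ ℂ^N intersecting 𝔹_N, the restriction of f to L ∩ 𝔹_N is non-extendable (i.e., there is no point ζ ∈ L ∩ b𝔹_N, no open neighborhood W of ζ in L, and no holomorphic function on (L ∩ 𝔹_N) ∪ W agreeing with f on L ∩ 𝔹_N near ζ) is residual in 𝒪(𝔹_N). -/

import Mathlib

open Set Filter Topology Metric MeasureTheory
open scoped ENNReal NNReal InnerProductSpace ComplexConjugate

noncomputable section

/-- `ℂ^N` with the Euclidean structure. -/
abbrev EN (N : ℕ) := EuclideanSpace ℂ (Fin N)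

instance {N : ℕ} : MeasurableSpace (EN N) := borel _
instance {N : ℕ} : BorelSpace (EN N) := ⟨rfl⟩

/-- A domain: a nonempty open connected subset. -/
def IsDomainSet {N : ℕ} (D : Set (EN N)) : Prop := IsOpen D ∧ IsConnected D

/-- `u` is plurisubharmonic on `D`: upper semicontinuous on `D`, and its restriction to
every complex affine line satisfies the sub-mean value inequality on every closed disc
(of that line) contained in `D`. -/
def PlurisubharmonicOn {N : ℕ} (u : EN N → ℝ) (D : Set (EN N)) : Prop :=
  UpperSemicontinuousOn u D ∧
  ∀ (a b : EN N) (t₀ : ℂ) (r : ℝ), 0 < r →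
    (fun t : ℂ => a + t • b) '' Metric.closedBall t₀ r ⊆ D →
    u (a + t₀ • b) ≤ (2 * Real.pi)⁻¹ *
      ∫ θ in (0:ℝ)..(2 * Real.pi), u (a + (t₀ + r * Complex.exp (θ * Complex.I)) • b)

/-- `D` is a pseudoconvex domain: a domain carrying a continuous plurisubharmonic
exhaustion function. -/
def Pseudoconvex {N : ℕ} (D : Set (EN N)) : Prop :=
  IsDomainSet D ∧ ∃ u : EN N → ℝ, ContinuousOn u D ∧ PlurisubharmonicOn u D ∧
    ∀ c : ℝ, IsCompact (closure {z ∈ D | u z < c}) ∧ closure {z ∈ D | u z < c} ⊆ D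

/-- The space `𝒪(D)` of holomorphic functions on `D`, as a submodule of `ℂ^N → ℂ`. -/
def Hol {N : ℕ} (D : Set (EN N)) : Submodule ℂ (EN N → ℂ) where
  carrier := {f | DifferentiableOn ℂ f D}
  add_mem' hf hg := hf.add hg
  zero_mem' := differentiableOn_const 0
  smul_mem' c f hf := hf.const_smul c

/-- The topology of uniform convergence on compact subsets of `D`, on `𝒪(D)`. -/
instance holTopology {N : ℕ} (D : Set (EN N)) : TopologicalSpace ↥(Hol D) :=
  TopologicalSpace.induced
    (fun f => UniformOnFun.ofFun {K : Set (EN N) | K ⊆ D ∧ IsCompact K} f.1)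
    inferInstance

/-- A set is residual if it contains a dense `G_δ` set. -/
def ResidualIn {X : Type*} [TopologicalSpace X] (S : Set X) : Prop :=
  ∃ T : Set X, T ⊆ S ∧ IsGδ T ∧ Dense T

/-- `S` is densely lineable: `S ∪ {0}` contains a dense vector subspace. -/
def DenselyLineableIn {X : Type*} [TopologicalSpace X] [AddCommMonoid X] [Module ℂ X]
    (S : Set X) : Prop :=
  ∃ p : Submodule ℂ X, Dense (p : Set X) ∧ (p : Set X) ⊆ S ∪ {0}

/-- `S` is spaceable: `S ∪ {0}` contains a closed infinite-dimensional vector subspace. -/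
def SpaceableIn {X : Type*} [TopologicalSpace X] [AddCommMonoid X] [Module ℂ X]
    (S : Set X) : Prop :=
  ∃ p : Submodule ℂ X, IsClosed (p : Set X) ∧ ¬ Module.Finite ℂ ↥p ∧ (p : Set X) ⊆ S ∪ {0}

/-- A finite length path to `bD`: continuous and piecewise `C¹` on `[0,1)`, with values in `D`,
finite length (total variation), converging to a boundary point of `D` as `r → 1`. -/
def FiniteLengthPathTo {N : ℕ} (D : Set (EN N)) (γ : ℝ → EN N) : Prop :=
  MapsTo γ (Ico (0:ℝ) 1) D ∧ ContinuousOn γ (Ico (0:ℝ) 1) ∧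
  (∃ u : ℕ → ℝ, u 0 = 0 ∧ StrictMono u ∧ (∀ n, u n < 1) ∧ Tendsto u atTop (𝓝 1) ∧
    ∀ n, ContDiffOn ℝ 1 γ (Icc (u n) (u (n+1)))) ∧
  eVariationOn γ (Ico (0:ℝ) 1) < ⊤ ∧
  ∃ ζ ∈ frontier D, Tendsto γ (𝓝[<] (1:ℝ)) (𝓝 ζ)

/-- The set of `f ∈ 𝒪(D)` with maximal cluster set along every finite length path to `bD`. -/
def WildSet {N : ℕ} (D : Set (EN N)) : Set ↥(Hol D) :=
  {f | ∀ γ : ℝ → EN N, FiniteLengthPathTo D γ → ∀ c : ℂ,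
    ∃ r : ℕ → ℝ, (∀ n, r n ∈ Ico (0:ℝ) 1) ∧ Tendsto r atTop (𝓝 1) ∧
      Tendsto (fun n => f.1 (γ (r n))) atTop (𝓝 c)}

/-- The `𝒪(D)`-hull of `K`. -/
def holHull {N : ℕ} (D K : Set (EN N)) : Set (EN N) :=
  {z ∈ D | ∀ φ : EN N → ℂ, DifferentiableOn ℂ φ D → ‖φ z‖ ≤ ⨆ w ∈ K, ‖φ w‖}

/-- `K` is `𝒪(D)`-convex. -/
def HolConvexIn {N : ℕ} (D K : Set (EN N)) : Prop := K ⊆ D ∧ holHull D K = K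

/-- The polynomial hull of a compact subset of `ℂ`. -/
def polyHull1 (E : Set ℂ) : Set ℂ :=
  {z | ∀ p : Polynomial ℂ, ‖p.eval z‖ ≤ ⨆ w ∈ E, ‖p.eval w‖}

/-- The polynomial hull of a subset of `ℂ^N`. -/
def polyHull {N : ℕ} (E : Set (EN N)) : Set (EN N) :=
  {z | ∀ p : MvPolynomial (Fin N) ℂ,
    ‖MvPolynomial.eval (fun j => z j) p‖ ≤ ⨆ w ∈ E, ‖MvPolynomial.eval (fun j => w j) p‖}

/-- `E ⊆ ℂ^N` is polynomially convex. -/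
def PolynomiallyConvex {N : ℕ} (E : Set (EN N)) : Prop := polyHull E = E

/-- The (real) Hessian of `ρ` at `p`, applied to the pair `(v, w)`. -/
def Hess {N : ℕ} (ρ : EN N → ℝ) (p v w : EN N) : ℝ :=
  fderiv ℝ (fderiv ℝ ρ) p v w

/-- The Levi form `∑_{j,k} ∂²ρ/∂z_j∂z̄_k (p) w_j w̄_k`, expressed through the real Hessian. -/
def LeviForm {N : ℕ} (ρ : EN N → ℝ) (p w : EN N) : ℝ :=
  (Hess ρ p w w + Hess ρ p (Complex.I • w) (Complex.I • w)) / 4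

/-- `w` belongs to the complex tangent space `{w : ∑_j ∂ρ/∂z_j(p) w_j = 0}` at `p`. -/
def ComplexTangent {N : ℕ} (ρ : EN N → ℝ) (p w : EN N) : Prop :=
  fderiv ℝ ρ p w = 0 ∧ fderiv ℝ ρ p (Complex.I • w) = 0

/-- `ρ` is a `C²` defining function for `D` on the open neighborhood `V` of `cl D`. -/
def IsDefiningFunctionOn {N : ℕ} (D : Set (EN N)) (ρ : EN N → ℝ) (V : Set (EN N)) : Prop :=
  IsOpen V ∧ closure D ⊆ V ∧ ContDiffOn ℝ 2 ρ V ∧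
  D = {z ∈ V | ρ z < 0} ∧ ∀ p ∈ frontier D, fderiv ℝ ρ p ≠ 0

/-- `D` is a strictly pseudoconvex domain with defining function `ρ`. -/
def StrictPSCWith {N : ℕ} (D : Set (EN N)) (ρ : EN N → ℝ) : Prop :=
  IsDomainSet D ∧ Bornology.IsBounded D ∧ (∃ V, IsDefiningFunctionOn D ρ V) ∧
  ∀ p ∈ frontier D, ∀ w : EN N, w ≠ 0 → ComplexTangent ρ p w → 0 < LeviForm ρ p w

/-- `D` is a strictly pseudoconvex domain. -/
def StrictlyPseudoconvex {N : ℕ} (D : Set (EN N)) : Prop := ∃ ρ, StrictPSCWith D ρ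

/-- `ρ` and `σ` are at `C²`-distance `< ε` on `V`. -/
def C2DistLt {N : ℕ} (V : Set (EN N)) (ρ σ : EN N → ℝ) (ε : ℝ) : Prop :=
  ∀ z ∈ V, |ρ z - σ z| + ‖fderiv ℝ ρ z - fderiv ℝ σ z‖ +
    ‖fderiv ℝ (fderiv ℝ ρ) z - fderiv ℝ (fderiv ℝ σ) z‖ < ε

/-- The standing assumptions on the map `γ : bD × [0,1] → cl D`: it is `C^k`, maps
`bD × [0,1)` into `D`, satisfies `γ(x,1) = x`, and the curves `r ↦ γ(x,r)` hit `bD`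
transversally at `x` (the `r`-derivative at `1` is not annihilated by `dρ(x)`,
i.e. it is not tangent to `bD` at `x`). -/
def GammaMap {N : ℕ} (D : Set (EN N)) (ρ : EN N → ℝ) (γ : EN N × ℝ → EN N) (k : ℕ) : Prop :=
  ContDiffOn ℝ k γ ((frontier D) ×ˢ Icc (0:ℝ) 1) ∧
  (∀ x ∈ frontier D, ∀ r ∈ Ico (0:ℝ) 1, γ (x, r) ∈ D) ∧
  (∀ x ∈ frontier D, γ (x, 1) = x) ∧
  ∀ x ∈ frontier D, fderiv ℝ ρ x (derivWithin (fun r => γ (x, r)) (Icc (0:ℝ) 1) 1) ≠ 0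

/-- Assumption (†): for all `r` close enough to `1`, `bD_r := γ(bD × {r})` bounds a strictly
pseudoconvex domain `D_r ⊆ D` whose defining function converges to `ρ` in `C²` norm on a
neighborhood `V` of `cl D` as `r → 1`. -/
def Dagger {N : ℕ} (D : Set (EN N)) (ρ : EN N → ℝ) (γ : EN N × ℝ → EN N) : Prop :=
  ∃ V : Set (EN N), IsOpen V ∧ closure D ⊆ V ∧
  ∃ (Dr : ℝ → Set (EN N)) (ρr : ℝ → EN N → ℝ),
    ∀ ε > 0, ∃ r₀ ∈ Ico (0:ℝ) 1, ∀ r ∈ Ioo r₀ 1,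
      StrictPSCWith (Dr r) (ρr r) ∧ Dr r ⊆ D ∧
      frontier (Dr r) = (fun x => γ (x, r)) '' frontier D ∧
      C2DistLt V (ρr r) ρ ε

/-- The `(2N-1)`-dimensional Hausdorff (surface) measure on `bD`. -/
def surfMeasure {N : ℕ} (D : Set (EN N)) : Measure (EN N) :=
  (Measure.hausdorffMeasure (2 * (N:ℝ) - 1)).restrict (frontier D)

/-- The normalized surface measure on `bD`. -/
def surfMeasureNorm {N : ℕ} (D : Set (EN N)) : Measure (EN N) :=
  ((Measure.hausdorffMeasure (2 * (N:ℝ) - 1) : Measure (EN N)) (frontier D))⁻¹ • surfMeasure D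

/-- The set `𝒲((r_j))` of `f ∈ 𝒪(D)` such that every measurable function on `bD` is an
a.e. limit of `f ∘ γ(·, r_{j_k})` along some subsequence of `(r_j)`. -/
def WSet {N : ℕ} (D : Set (EN N)) (γ : EN N × ℝ → EN N) (r : ℕ → ℝ) : Set ↥(Hol D) :=
  {f | ∀ h : EN N → ℂ, Measurable h → ∃ φ : ℕ → ℕ, StrictMono φ ∧
    ∀ᵐ x ∂ surfMeasure D, Tendsto (fun k => f.1 (γ (x, r (φ k)))) atTop (𝓝 (h x))}

/-- `Γ` is a closed cap of a convex set `V`: the closure of a connected component of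
`V \ H` for some real affine hyperplane `H` (for convex `V`, a nonempty open half-space
slice of `V`). -/
def IsClosedCap {N : ℕ} (V : Set (EN N)) (Γ : Set (EN N)) : Prop :=
  ∃ (l : EN N →L[ℝ] ℝ) (c : ℝ), l ≠ 0 ∧ (V ∩ {z | c < l z}).Nonempty ∧
    Γ = closure (V ∩ {z | c < l z})

/-- `V` is a strictly convex domain: a bounded convex domain with `C²` boundary whose
defining function has positive definite real Hessian on the real tangent space. -/
def StrictlyConvexDomain {N : ℕ} (V : Set (EN N)) : Prop :=
  IsDomainSet V ∧ Bornology.IsBounded V ∧ Convex ℝ V ∧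
  ∃ (ρ : EN N → ℝ) (W : Set (EN N)), IsDefiningFunctionOn V ρ W ∧
    ∀ p ∈ frontier V, ∀ w : EN N, w ≠ 0 → fderiv ℝ ρ p w = 0 → 0 < Hess ρ p w w

/-- The defining function `‖z‖² - 1` of the unit ball. -/
def ballRho {N : ℕ} : EN N → ℝ := fun z => ‖z‖ ^ 2 - 1

/-- The normalized surface measure on the unit sphere of `ℂ^N`. -/
def sphMeasure (N : ℕ) : Measure (EN N) :=
  ((Measure.hausdorffMeasure (2 * (N:ℝ) - 1) : Measure (EN N)) (Metric.sphere 0 1))⁻¹ •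
    (Measure.hausdorffMeasure (2 * (N:ℝ) - 1)).restrict (Metric.sphere 0 1)

/-- `v` is a weight: increasing on `[0,∞)`, nonnegative, and tending to `∞`. -/
def IsWeight (v : ℝ → ℝ) : Prop :=
  (∀ x ∈ Ici (0:ℝ), 0 ≤ v x) ∧ MonotoneOn v (Ici 0) ∧ Tendsto v atTop atTop

/-- The norm `‖f‖ = sup_{z ∈ 𝔹_N} |f z| / v(|z|)` of `H_v^0`. -/
def hvNorm {N : ℕ} (v : ℝ → ℝ) (f : EN N → ℂ) : ℝ :=
  ⨆ z ∈ Metric.ball (0:EN N) 1, ‖f z‖ / v ‖z‖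

/-- Membership in `H_v^0`: `f` is holomorphic on `𝔹_N` and `sup_{|z|=r} |f z| / v(r) → 0`
as `r → 1⁻`. -/
def MemHv {N : ℕ} (v : ℝ → ℝ) (f : EN N → ℂ) : Prop :=
  DifferentiableOn ℂ f (Metric.ball 0 1) ∧
  Tendsto (fun r : ℝ => ⨆ z ∈ Metric.sphere (0:EN N) r, ‖f z‖ / v r) (𝓝[<] 1) (𝓝 0)

/-- `S` contains, relatively to `H_v^0` with its norm topology, a dense `G_δ` subset:
there are countably many relatively norm-open sets `U n` whose intersection with `H_v^0`
is norm-dense in `H_v^0` and contained in `S`. -/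
def ResidualInHv {N : ℕ} (v : ℝ → ℝ) (S : Set (EN N → ℂ)) : Prop :=
  ∃ U : ℕ → Set (EN N → ℂ),
    (∀ n, ∀ f, MemHv v f → f ∈ U n →
      ∃ δ > 0, ∀ g, MemHv v g → hvNorm v (g - f) < δ → g ∈ U n) ∧
    (∀ f, MemHv v f → ∀ δ > 0, ∃ g, MemHv v g ∧ (∀ n, g ∈ U n) ∧ hvNorm v (g - f) < δ) ∧
    ∀ f, MemHv v f → (∀ n, f ∈ U n) → f ∈ S

/-- `S` is densely lineable in `H_v^0`: `S ∪ {0}` contains a norm-dense subspace of `H_v^0`. -/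
def DenselyLineableInHv {N : ℕ} (v : ℝ → ℝ) (S : Set (EN N → ℂ)) : Prop :=
  ∃ p : Submodule ℂ (EN N → ℂ), (↑p ⊆ {f : EN N → ℂ | MemHv v f}) ∧ (↑p ⊆ S ∪ {0}) ∧
    ∀ f, MemHv v f → ∀ δ > 0, ∃ g ∈ p, hvNorm v (g - f) < δ

/-- `S` is spaceable in `H_v^0`: `S ∪ {0}` contains a norm-closed infinite-dimensional
subspace of `H_v^0`. -/
def SpaceableInHv {N : ℕ} (v : ℝ → ℝ) (S : Set (EN N → ℂ)) : Prop :=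
  ∃ p : Submodule ℂ (EN N → ℂ), (↑p ⊆ {f : EN N → ℂ | MemHv v f}) ∧ (↑p ⊆ S ∪ {0}) ∧
    ¬ Module.Finite ℂ ↥p ∧
    ∀ f, MemHv v f → (∀ δ > 0, ∃ g ∈ p, hvNorm v (g - f) < δ) → f ∈ p

/-- The standing assumptions on the family `{γ_z : z ∈ 𝔹_N}`: each `γ_z` is a `C¹` map
`b𝔹_N × [0,1] → cl 𝔹_N` into `𝔹_N` for `r < 1` with `γ_z(x,1) = x`, transversal approach
and (†), with joint continuity of `(z,x,r) ↦ γ_z(x,r)` and of `(z,r) ↦ ∂γ_z(x,r)/∂r`. -/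
def BallGammaFamily {N : ℕ} (γ : EN N → EN N × ℝ → EN N) : Prop :=
  (∀ z ∈ Metric.ball (0:EN N) 1,
    GammaMap (Metric.ball 0 1) ballRho (γ z) 1 ∧ Dagger (Metric.ball 0 1) ballRho (γ z)) ∧
  ContinuousOn (fun p : EN N × (EN N × ℝ) => γ p.1 p.2)
    (Metric.ball 0 1 ×ˢ (Metric.sphere 0 1 ×ˢ Icc (0:ℝ) 1)) ∧
  ∀ x ∈ Metric.sphere (0:EN N) 1,
    ContinuousOn (fun p : EN N × ℝ => derivWithin (fun r => γ p.1 (x, r)) (Icc (0:ℝ) 1) p.2)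
      (Metric.ball 0 1 ×ˢ Icc (0:ℝ) 1)

/-- The set of `f` such that for every `z ∈ 𝔹_N`, every measurable function on `b𝔹_N` is an
a.e. limit of `f ∘ γ_z(·, r_{j_k})` along some subsequence of `(r_j)`. -/
def WSetHv {N : ℕ} (γ : EN N → EN N × ℝ → EN N) (r : ℕ → ℝ) : Set (EN N → ℂ) :=
  {f | ∀ z ∈ Metric.ball (0:EN N) 1, ∀ h : EN N → ℂ, Measurable h →
    ∃ φ : ℕ → ℕ, StrictMono φ ∧
      ∀ᵐ x ∂ sphMeasure N, Tendsto (fun k => f (γ z (x, r (φ k)))) atTop (𝓝 (h x))}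

/-- The set `E_L^* = {γ_z(x,r) : x ∈ E, r ∈ [0,1], z ∈ L}`. -/
def EStarSet {N : ℕ} (γ : EN N → EN N × ℝ → EN N) (L E : Set (EN N)) : Set (EN N) :=
  {w | ∃ z ∈ L, ∃ x ∈ E, ∃ r ∈ Icc (0:ℝ) 1, w = γ z (x, r)}

/-- The Korányi approach region `D_α(x)`. -/
def Koranyi {N : ℕ} (α : ℝ) (x : EN N) : Set (EN N) :=
  {z ∈ Metric.ball (0:EN N) 1 | ‖1 - (⟪x, z⟫_ℂ : ℂ)‖ < α / 2 * (1 - ‖z‖ ^ 2)}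

/-- `h` has a `K`-limit at `x`: for every `α > 1` the values of `h` converge along every
sequence in `D_α(x)` converging to `x`. -/
def HasKLimitAt {N : ℕ} (h : EN N → ℂ) (x : EN N) : Prop :=
  ∀ α > (1:ℝ), ∃ c : ℂ, ∀ z : ℕ → EN N, (∀ i, z i ∈ Koranyi α x) →
    Tendsto z atTop (𝓝 x) → Tendsto (fun i => h (z i)) atTop (𝓝 c)

/-- The circle `bL_x = L_x ∩ b𝔹_N` cut out on the complex line through `x` and `0`. -/
def lineCircle {N : ℕ} (x : EN N) : Set (EN N) :=
  {z | ∃ t : ℂ, z = t • x} ∩ Metric.sphere 0 1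

end

/-!
A slice that meets the ball crosses the sphere transversally, so it suffices to make `f` unbounded
at every boundary point of every transversal slice. By Baire's theorem this reduces to showing that
the functions exceeding `C` on each slice of angle at least `δ`, within `δ` of the boundary point,
form a dense open set. It is open because the slices of angle at least `δ` form a compact family.
It is dense because every `f` is approximated by its dilations, which are bounded, and one can add
to these an entire function that is small on a given smaller ball and large on all those slices.

Such an entire function is a finite sum of powers of `⟪w, ·⟫`, where the vectors `w` have norm
slightly larger than `1`: the caps `{1 < ‖⟪w, ·⟫‖}` then miss the smaller ball but cover the sphere.
With exponents growing fast enough, the sum is large on compact subsets of the union of the caps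
that avoid the walls `{‖⟪w, ·⟫‖ = 1}`. A slice of angle at least `δ` has plenty of points off the
walls, since a functional `⟪w, ·⟫` that is constant on it takes there a value of modulus less
than `1`.
-/

section UniformLimits

variable {E F ι : Type*} [NormedAddCommGroup E] [NormedSpace ℂ E] [NormedAddCommGroup F]
  [NormedSpace ℂ F]

theorem norm_fderiv_le_of_forall_norm_le {f : E → F} {c : E} {r M : ℝ} (hr : 0 < r)
    (hf : DifferentiableOn ℂ f (ball c r)) (hM : ∀ z ∈ ball c r, ‖f z‖ ≤ M) :
    ‖fderiv ℂ f c‖ ≤ 2 * M / r := by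
  refine Complex.norm_fderiv_le_div_of_mapsTo_ball hf (fun z hz => ?_) hr
  rw [mem_closedBall, dist_eq_norm_sub]
  linarith [norm_sub_le (f z) (f c), hM z hz, hM c (mem_ball_self hr)]

theorem uniformCauchySeqOn_fderiv {f : ι → E → F} {l : Filter ι} {s : Set E} {r : ℝ}
    (hr : 0 < r) (hf : ∀ᶠ n in l, DifferentiableOn ℂ (f n) (thickening r s))
    (hcauchy : UniformCauchySeqOn f l (thickening r s)) :
    UniformCauchySeqOn (fun n => fderiv ℂ (f n)) l s := by
  intro u hu
  obtain ⟨ε, hε, hεu⟩ := Metric.mem_uniformity_dist.1 hu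
  have hclose := hcauchy _ (dist_mem_uniformity (show 0 < ε * r / 4 by positivity))
  filter_upwards [hclose, hf.prod_mk hf] with n hn hdiff x hx
  have hball : ball x r ⊆ thickening r s := ball_subset_thickening hx r
  have hat (m : ι) (hm : DifferentiableOn ℂ (f m) (thickening r s)) :
      DifferentiableAt ℂ (f m) x :=
    hm.differentiableAt (isOpen_thickening.mem_nhds (hball (mem_ball_self hr)))
  have hbound : ‖fderiv ℂ (f n.1 - f n.2) x‖ ≤ 2 * (ε * r / 4) / r :=
    norm_fderiv_le_of_forall_norm_le hr ((hdiff.1.sub hdiff.2).mono hball) fun z hz => by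
      simpa [dist_eq_norm_sub] using (hn z (hball hz)).le
  refine hεu ?_
  rw [dist_eq_norm_sub, ← fderiv_sub (hat _ hdiff.1) (hat _ hdiff.2)]
  calc ‖fderiv ℂ (f n.1 - f n.2) x‖ ≤ 2 * (ε * r / 4) / r := hbound
    _ = ε / 2 := by field_simp; norm_num
    _ < ε := half_lt_self hε

theorem differentiableAt_of_tendstoUniformlyOn [CompleteSpace F] {f : ι → E → F} {g : E → F}
    {l : Filter ι} [l.NeBot] {s : Set E} {x : E} (hs : s ∈ 𝓝 x)
    (hf : ∀ᶠ n in l, DifferentiableOn ℂ (f n) s) (hfg : TendstoUniformlyOn f g l s) :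
    DifferentiableAt ℂ g x := by
  obtain ⟨r, hr, hrs⟩ := Metric.mem_nhds_iff.1 hs
  have hthick : thickening (r / 2) (ball x (r / 2)) ⊆ s := by
    rw [← thickening_singleton]
    refine (thickening_thickening_subset _ _ _).trans ?_
    rwa [add_halves, thickening_singleton]
  have hball : ball x (r / 2) ∈ 𝓝 x := ball_mem_nhds x (half_pos hr)
  have hcauchy : UniformCauchySeqOn (fun n => fderiv ℂ (f n)) l (ball x (r / 2)) :=
    uniformCauchySeqOn_fderiv (half_pos hr) (hf.mono fun n hn => hn.mono hthick)
      (hfg.uniformCauchySeqOn.mono hthick)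
  choose! f' hf' using fun y (hy : y ∈ ball x (r / 2)) =>
    cauchy_map_iff_exists_tendsto.1 (hcauchy.cauchy_map hy)
  refine (hasFDerivAt_of_tendstoUniformlyOnFilter (f := f)
    ((hcauchy.tendstoUniformlyOn_of_tendsto hf').tendstoUniformlyOnFilter.mono_right
      (le_principal_iff.2 hball)) ?_ ?_).differentiableAt
  · filter_upwards [hf.prod_mk (eventually_eventually_nhds.2 hs)] with p hp
    exact (hp.1.differentiableAt hp.2).hasFDerivAt
  · filter_upwards [hs] with y hy using hfg.tendsto_at hy

end UniformLimits

theorem exists_seq_isCompact_monotone {X : Type*} [TopologicalSpace X] [LocallyCompactSpace X]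
    [SecondCountableTopology X] {D : Set X} (hD : IsOpen D) :
    ∃ K : ℕ → Set X, (∀ n, K n ⊆ D ∧ IsCompact (K n)) ∧ Monotone K ∧
      ∀ L ⊆ D, IsCompact L → ∃ n, L ⊆ K n := by
  have := hD.locallyCompactSpace
  let K := CompactExhaustion.choice D
  refine ⟨fun n => (↑) '' K n, fun n => ⟨Subtype.coe_image_subset D _,
    (K.isCompact n).image continuous_subtype_val⟩, fun m n h => image_mono (K.subset h), ?_⟩
  intro L hLD hL
  have hL' : IsCompact ((↑) ⁻¹' L : Set D) :=
    IsInducing.subtypeVal.isCompact_preimage_iff (by simpa) |>.2 hL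
  obtain ⟨n, hn⟩ := K.exists_superset_of_isCompact hL'
  exact ⟨n, fun z hz => ⟨⟨z, hLD hz⟩, hn hz, rfl⟩⟩

section HolTopology

variable {N : ℕ} {D : Set (EN N)}

/-- The inclusion of `𝒪(D)` into the space of all functions with uniform convergence on compact
subsets of `D`, from which the topology of `𝒪(D)` is induced. -/
def Hol.toUniformOnFun (f : Hol D) :
    UniformOnFun (EN N) ℂ {K : Set (EN N) | K ⊆ D ∧ IsCompact K} :=
  UniformOnFun.ofFun _ f.1

theorem Hol.hasBasis_nhds (f : Hol D) :
    (𝓝 f).HasBasis (fun p : Set (EN N) × ℝ => (p.1 ⊆ D ∧ IsCompact p.1) ∧ 0 < p.2)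
      fun p => {g | ∀ z ∈ p.1, dist (g.1 z) (f.1 z) < p.2} := by
  rw [nhds_induced]
  refine (UniformOnFun.hasBasis_nhds_of_basis (EN N) ℂ _ (Hol.toUniformOnFun f)
    ⟨∅, empty_subset D, isCompact_empty⟩ ?_ Metric.uniformity_basis_dist).comap Hol.toUniformOnFun
  rintro K ⟨hKD, hK⟩ L ⟨hLD, hL⟩
  exact ⟨K ∪ L, ⟨union_subset hKD hLD, hK.union hL⟩, subset_union_left, subset_union_right⟩

theorem Hol.isClosed_range_toUniformOnFun (hD : IsOpen D) :
    IsClosed (range (Hol.toUniformOnFun (D := D))) := by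
  refine isClosed_iff_clusterPt.2 fun g hg => ⟨⟨UniformOnFun.toFun _ g, fun x hx => ?_⟩, rfl⟩
  obtain ⟨K, hK, hxK, hKD⟩ := exists_compact_subset hD hx
  have : (𝓝 g ⊓ 𝓟 (range (Hol.toUniformOnFun (D := D)))).NeBot := hg
  have hlim := UniformOnFun.tendsto_iff_tendstoUniformlyOn.1 (tendsto_id'.2
    (inf_le_left : 𝓝 g ⊓ 𝓟 (range (Hol.toUniformOnFun (D := D))) ≤ 𝓝 g)) K ⟨hKD, hK⟩
  refine (differentiableAt_of_tendstoUniformlyOn (mem_interior_iff_mem_nhds.1 hxK) ?_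
    hlim).differentiableWithinAt
  filter_upwards [mem_inf_of_right (mem_principal_self _)]
  rintro _ ⟨f, rfl⟩
  exact f.2.mono hKD

theorem Hol.baireSpace (hD : IsOpen D) : BaireSpace (Hol D) := by
  let _ : UniformSpace (Hol D) := .comap Hol.toUniformOnFun inferInstance
  have hind : IsUniformInducing (Hol.toUniformOnFun (D := D)) := ⟨rfl⟩
  obtain ⟨K, hK, hmono, hexh⟩ := exists_seq_isCompact_monotone hD
  have := UniformOnFun.isCountablyGenerated_uniformity (β := ℂ)
    {K : Set (EN N) | K ⊆ D ∧ IsCompact K} hK hmono fun L hL => hexh L hL.1 hL.2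
  have : (uniformity (Hol D)).IsCountablyGenerated := Filter.comap.isCountablyGenerated _ _
  have : CompleteSpace (Hol D) :=
    (completeSpace_iff_isComplete_range hind).2 (Hol.isClosed_range_toUniformOnFun hD).isComplete
  have : TopologicalSpace.IsCompletelyPseudoMetrizableSpace (Hol D) :=
    .of_completeSpace_pseudometrizable
  infer_instance

end HolTopology

section Slices

variable {E : Type*} [NormedAddCommGroup E] [InnerProductSpace ℂ E]

/-- `G` meets, at distance less than `δ` from the point `ζ` of the unit sphere, every complex line
`ζ + ℂ b` that makes an angle at least `δ` (measured by `‖⟪b, ζ⟫‖` for unit `b`) with the complex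
tangent space of the sphere at `ζ`. -/
def MeetsSlices (δ : ℝ) (G : Set E) : Prop :=
  ∀ ζ b : E, ‖ζ‖ = 1 → ‖b‖ = 1 → δ ≤ ‖⟪b, ζ⟫_ℂ‖ → ∃ t : ℂ, ‖t‖ < δ ∧ ζ + t • b ∈ G

namespace MeetsSlices

variable {δ : ℝ} {G H : Set E}

theorem mono (hG : MeetsSlices δ G) (hGH : G ⊆ H) : MeetsSlices δ H := fun ζ b hζ hb hδ =>
  (hG ζ b hζ hb hδ).imp fun _ ht => ⟨ht.1, hGH ht.2⟩

theorem exists_isCompact_subset [ProperSpace E] (hG : MeetsSlices δ G) (hopen : IsOpen G) :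
    ∃ K ⊆ G, IsCompact K ∧ MeetsSlices δ K := by
  let P : Set (E × E) := sphere 0 1 ×ˢ sphere 0 1 ∩ {p | δ ≤ ‖⟪p.2, p.1⟫_ℂ‖}
  have hP : IsCompact P := ((isCompact_sphere 0 1).prod (isCompact_sphere 0 1)).inter_right
    (isClosed_le continuous_const (by fun_prop))
  suffices ∃ K ⊆ G, IsCompact K ∧ ∀ p ∈ P, ∃ t : ℂ, ‖t‖ < δ ∧ p.1 + t • p.2 ∈ K by
    obtain ⟨K, hKG, hK, hmeets⟩ := this
    exact ⟨K, hKG, hK, fun ζ b hζ hb hδ => hmeets (ζ, b) (by simp [P, hζ, hb, hδ])⟩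
  refine hP.induction_on (p := fun S => ∃ K ⊆ G, IsCompact K ∧
    ∀ p ∈ S, ∃ t : ℂ, ‖t‖ < δ ∧ p.1 + t • p.2 ∈ K) ?_ ?_ ?_ ?_
  · exact ⟨∅, empty_subset G, isCompact_empty, by simp⟩
  · rintro S T hST ⟨K, hKG, hK, hT⟩
    exact ⟨K, hKG, hK, fun p hp => hT p (hST hp)⟩
  · rintro S T ⟨K, hKG, hK, hS⟩ ⟨L, hLG, hL, hT⟩
    refine ⟨K ∪ L, union_subset hKG hLG, hK.union hL, ?_⟩
    rintro p (hp | hp)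
    · exact (hS p hp).imp fun t ht => ⟨ht.1, .inl ht.2⟩
    · exact (hT p hp).imp fun t ht => ⟨ht.1, .inr ht.2⟩
  · rintro p ⟨⟨hζ, hb⟩, hδ⟩
    obtain ⟨t, ht, htG⟩ := hG p.1 p.2 (by simpa using hζ) (by simpa using hb) hδ
    obtain ⟨K, hK, hmem, hKG⟩ := exists_compact_subset hopen htG
    have hcont : Continuous fun p : E × E => p.1 + t • p.2 := by fun_prop
    refine ⟨_, mem_nhdsWithin_of_mem_nhds
      (hcont.continuousAt.preimage_mem_nhds (isOpen_interior.mem_nhds hmem)), K, hKG, hK, ?_⟩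
    exact fun q hq => ⟨t, ht, interior_subset hq⟩

theorem exists_norm_smul_lt (hG : MeetsSlices δ G) {ζ b : E} (hζ : ‖ζ‖ = 1) (hb : b ≠ 0)
    (hδ : δ * ‖b‖ ≤ ‖⟪b, ζ⟫_ℂ‖) : ∃ t : ℂ, ‖t • b‖ < δ ∧ ζ + t • b ∈ G := by
  have hb' : (0 : ℝ) < ‖b‖ := norm_pos_iff.2 hb
  obtain ⟨t, ht, htG⟩ := hG ζ ((‖b‖⁻¹ : ℂ) • b) hζ (by simp [norm_smul, hb'.ne']) (by
    simpa [inner_smul_left, ← div_eq_mul_inv, le_div_iff₀ hb'] using hδ)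
  refine ⟨t * (‖b‖ : ℂ)⁻¹, ?_, by rwa [mul_smul]⟩
  simpa [norm_smul, hb'.ne'] using ht

end MeetsSlices

theorem inner_ne_zero_of_norm_add_smul_lt {ζ b : E} {t : ℂ} (h : ‖ζ + t • b‖ < ‖ζ‖) :
    ⟪b, ζ⟫_ℂ ≠ 0 := by
  intro hbζ
  refine h.not_ge ?_
  have hpyth := norm_add_sq_eq_norm_sq_add_norm_sq_of_inner_eq_zero (𝕜 := ℂ) ζ (t • b)
    (by rw [inner_smul_right, inner_eq_zero_symm.1 hbζ, mul_zero])
  nlinarith [norm_nonneg ζ, norm_nonneg (ζ + t • b), norm_nonneg (t • b)]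

theorem norm_sub_inner_smul_sq {b : E} (hb : ‖b‖ = 1) (ζ : E) :
    ‖ζ - ⟪b, ζ⟫_ℂ • b‖ ^ 2 = ‖ζ‖ ^ 2 - ‖⟪b, ζ⟫_ℂ‖ ^ 2 := by
  have horth : ⟪ζ - ⟪b, ζ⟫_ℂ • b, ⟪b, ζ⟫_ℂ • b⟫_ℂ = 0 := by
    simp [hb, inner_self_eq_norm_sq_to_K]
  have hpyth := norm_add_sq_eq_norm_sq_add_norm_sq_of_inner_eq_zero _ _ horth
  rw [sub_add_cancel, norm_smul, hb, mul_one] at hpyth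
  linarith

theorem norm_inner_sq_le_of_inner_eq_zero {b w : E} (hb : ‖b‖ = 1) (hwb : ⟪w, b⟫_ℂ = 0) (ζ : E) :
    ‖⟪w, ζ⟫_ℂ‖ ^ 2 ≤ ‖w‖ ^ 2 * (‖ζ‖ ^ 2 - ‖⟪b, ζ⟫_ℂ‖ ^ 2) := by
  have hfoot : ⟪w, ζ⟫_ℂ = ⟪w, ζ - ⟪b, ζ⟫_ℂ • b⟫_ℂ := by
    rw [inner_sub_right, inner_smul_right, hwb, mul_zero, sub_zero]
  rw [← norm_sub_inner_smul_sq hb, ← mul_pow, hfoot]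
  gcongr
  exact norm_inner_le_norm _ _

theorem frequently_norm_add_smul_lt {ζ b : E} (hb : ‖b‖ = 1) (h : ⟪b, ζ⟫_ℂ ≠ 0) :
    ∃ᶠ t in 𝓝 (0 : ℂ), ‖ζ + t • b‖ < ‖ζ‖ := by
  have hfoot : ‖ζ - ⟪b, ζ⟫_ℂ • b‖ < ‖ζ‖ := by
    refine lt_of_pow_lt_pow_left₀ 2 (norm_nonneg ζ) ?_
    rw [norm_sub_inner_smul_sq hb]
    exact sub_lt_self _ (pow_pos (norm_pos_iff.2 h) 2)
  have hlim : Tendsto (fun s : ℝ => -(s : ℂ) * ⟪b, ζ⟫_ℂ) (𝓝[>] 0) (𝓝 0) :=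
    tendsto_nhdsWithin_of_tendsto_nhds (Continuous.tendsto' (by fun_prop) _ _ (by simp))
  refine hlim.frequently (Eventually.frequently ?_)
  filter_upwards [Ioo_mem_nhdsGT one_pos] with s ⟨hs₀, hs₁⟩
  have hseg : ζ + (-(s : ℂ) * ⟪b, ζ⟫_ℂ) • b =
      ((1 - s : ℝ) : ℂ) • ζ + (s : ℂ) • (ζ - ⟪b, ζ⟫_ℂ • b) := by
    push_cast
    module
  calc ‖ζ + (-(s : ℂ) * ⟪b, ζ⟫_ℂ) • b‖ ≤ (1 - s) * ‖ζ‖ + s * ‖ζ - ⟪b, ζ⟫_ℂ • b‖ := by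
        rw [hseg]
        refine (norm_add_le _ _).trans_eq ?_
        rw [norm_smul, norm_smul, Complex.norm_of_nonneg (sub_nonneg.2 hs₁.le),
          Complex.norm_of_nonneg hs₀.le]
    _ < (1 - s) * ‖ζ‖ + s * ‖ζ‖ := by gcongr
    _ = ‖ζ‖ := by ring

end Slices

section LacunarySums

theorem eventually_forall_le_pow {X : Type*} [TopologicalSpace X] {K : Set X} {f : X → ℝ}
    (hK : IsCompact K) (hf : ContinuousOn f K) (h : ∀ z ∈ K, 1 < f z) (C : ℝ) :
    ∀ᶠ k : ℕ in atTop, ∀ z ∈ K, C ≤ f z ^ k := by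
  obtain ⟨a, ha, haf⟩ := hK.exists_forall_le' hf h
  filter_upwards [(tendsto_pow_atTop_atTop_of_one_lt ha).eventually_ge_atTop C] with k hk z hz
  exact hk.trans (pow_le_pow_left₀ (zero_le_one.trans ha.le) (haf z hz) k)

theorem eventually_forall_pow_le {X : Type*} [TopologicalSpace X] {K : Set X} {f : X → ℝ}
    (hK : IsCompact K) (hf : ContinuousOn f K) (h₀ : ∀ z ∈ K, 0 ≤ f z) (h₁ : ∀ z ∈ K, f z < 1)
    {ε : ℝ} (hε : 0 < ε) : ∀ᶠ k : ℕ in atTop, ∀ z ∈ K, f z ^ k ≤ ε := by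
  obtain ⟨a, ha, haf⟩ := hK.exists_forall_le' hf.neg fun z hz => neg_lt_neg (h₁ z hz)
  have hlim : Tendsto (fun k : ℕ => max (-a) 0 ^ k) atTop (𝓝 0) :=
    tendsto_pow_atTop_nhds_zero_of_lt_one (le_max_right _ 0) (max_lt (neg_lt.1 ha) one_pos)
  filter_upwards [hlim.eventually_le_const hε] with k hk z hz
  exact (pow_le_pow_left₀ (h₀ z hz) ((le_neg.1 (haf z hz)).trans (le_max_left _ 0)) k).trans hk

theorem exists_differentiable_norm_le_and_le_norm {E : Type*} [NormedAddCommGroup E]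
    [NormedSpace ℂ E] (Φ : Finset (E → ℂ)) {L K : Set E} (hΦ : ∀ φ ∈ Φ, Differentiable ℂ φ)
    (hL : IsCompact L) (hΦL : ∀ φ ∈ Φ, ∀ z ∈ L, ‖φ z‖ < 1) (hK : IsCompact K)
    (hΦK : ∀ φ ∈ Φ, ∀ z ∈ K, ‖φ z‖ ≠ 1) (hlarge : ∀ z ∈ K, ∃ φ ∈ Φ, 1 < ‖φ z‖)
    {ε : ℝ} (hε : 0 < ε) (C : ℝ) :
    ∃ q : E → ℂ, Differentiable ℂ q ∧ (∀ z ∈ L, ‖q z‖ ≤ ε) ∧ ∀ z ∈ K, C ≤ ‖q z‖ := by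
  induction Φ using Finset.cons_induction generalizing K ε C with
  | empty => exact ⟨0, differentiable_const 0, by simp [hε.le],
      fun z hz => by simpa using hlarge z hz⟩
  | cons φ Φ _ ih =>
    simp only [Finset.mem_cons, forall_eq_or_imp, exists_eq_or_imp] at hΦ hΦL hΦK hlarge
    have hφ : Continuous fun z => ‖φ z‖ := hΦ.1.continuous.norm
    have hK₁ : IsCompact (K ∩ {z | ‖φ z‖ ≤ 1}) :=
      hK.inter_right (isClosed_le hφ continuous_const)
    have hK₂ : IsCompact (K ∩ {z | 1 ≤ ‖φ z‖}) :=
      hK.inter_right (isClosed_le continuous_const hφ)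
    obtain ⟨q, hq, hqL, hqK⟩ := ih hΦ.2 hΦL.2 hK₁ (fun ψ hψ z hz => hΦK.2 ψ hψ z hz.1)
      (fun z hz => (hlarge z hz.1).resolve_left hz.2.not_gt) (half_pos hε) (C + 1)
    obtain ⟨M, hM⟩ := hK.exists_bound_of_continuousOn hq.continuous.continuousOn
    obtain ⟨k, hkL, hkK⟩ := ((eventually_forall_pow_le hL hφ.continuousOn
      (fun z _ => norm_nonneg _) hΦL.1 (half_pos hε)).and (eventually_forall_le_pow hK₂
      hφ.continuousOn (fun z hz => hz.2.lt_of_ne' (hΦK.1 z hz.1)) (C + M))).exists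
    -- The new power is at most `1` where `q` is already large, and dominates `q` elsewhere.
    refine ⟨fun z => q z + φ z ^ k, hq.add (hΦ.1.pow k), fun z hz => ?_, fun z hz => ?_⟩
    · linarith [norm_add_le (q z) (φ z ^ k), norm_pow (φ z) k, hqL z hz, hkL z hz]
    · rcases le_total ‖φ z‖ 1 with hle | hge
      · linarith [norm_le_add_norm_add (q z) (φ z ^ k), norm_pow (φ z) k, hqK z ⟨hz, hle⟩,
          pow_le_one₀ (n := k) (norm_nonneg (φ z)) hle]
      · linarith [norm_le_add_norm_add' (q z) (φ z ^ k), norm_pow (φ z) k, hkK z ⟨hz, hge⟩,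
          hM z hz]

end LacunarySums

section Caps

variable {E : Type*} [NormedAddCommGroup E] [InnerProductSpace ℂ E] {F : Finset E}

theorem exists_finset_forall_one_lt_norm_inner [ProperSpace E] {R : ℝ} (hR : 1 < R) :
    ∃ F : Finset E, (∀ w ∈ F, ‖w‖ = R) ∧ ∀ ζ : E, ‖ζ‖ = 1 → ∃ w ∈ F, 1 < ‖⟪w, ζ⟫_ℂ‖ := by
  obtain ⟨F, hFR, hF⟩ := (isCompact_sphere (0 : E) 1).elim_finite_subcover_image
    (b := sphere 0 R) (c := fun w => {ζ : E | 1 < ‖⟪w, ζ⟫_ℂ‖})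
    (fun w _ => isOpen_lt continuous_const (by fun_prop)) fun ζ hζ => by
      rw [mem_sphere_zero_iff_norm] at hζ
      refine mem_biUnion (x := (R : ℂ) • ζ) ?_ ?_
      · simp [norm_smul, hζ, abs_of_pos (one_pos.trans hR)]
      · simp [inner_self_eq_norm_sq_to_K, hζ, lt_abs, hR]
  refine ⟨hF.1.toFinset, fun w hw => ?_, fun ζ hζ => ?_⟩
  · simpa using hFR (hF.1.mem_toFinset.1 hw)
  · simpa using hF.2 (mem_sphere_zero_iff_norm.2 hζ)

/-- The part of the unit ball cut out by the caps `{1 < ‖⟪w, ·⟫‖}`, `w ∈ F`, with the walls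
`{‖⟪w, ·⟫‖ = 1}` removed. -/
def capsWithoutWalls (F : Finset E) : Set E :=
  {z ∈ ball 0 1 | (∀ w ∈ F, ‖⟪w, z⟫_ℂ‖ ≠ 1) ∧ ∃ w ∈ F, 1 < ‖⟪w, z⟫_ℂ‖}

theorem isOpen_capsWithoutWalls : IsOpen (capsWithoutWalls F) := by
  have hwalls : IsOpen {z : E | ∀ w ∈ F, ‖⟪w, z⟫_ℂ‖ ≠ 1} := by
    simp only [ofPred_forall]
    exact isOpen_biInter_finset fun w _ => isOpen_ne_fun (by fun_prop) continuous_const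
  have hcaps : IsOpen {z : E | ∃ w ∈ F, 1 < ‖⟪w, z⟫_ℂ‖} := by
    simp only [ofPred_exists, ← exists_prop]
    exact isOpen_biUnion fun w _ => isOpen_lt continuous_const (by fun_prop)
  exact isOpen_ball.inter (hwalls.inter hcaps)

theorem dense_setOf_norm_add_mul_ne {α β : ℂ} {R : ℝ} (hR : R ≠ 0) (h : β = 0 → ‖α‖ ≠ R) :
    Dense {t : ℂ | ‖α + t * β‖ ≠ R} := by
  rcases eq_or_ne β 0 with rfl | hβ
  · simp [h rfl]
  · have hsphere : Dense (sphere (0 : ℂ) R)ᶜ :=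
      interior_eq_empty_iff_dense_compl.1 (interior_sphere 0 hR)
    have := hsphere.preimage ((Homeomorph.mulRight₀ β hβ).trans (Homeomorph.addLeft α)).isOpenMap
    simpa [preimage_compl, sphere, Set.compl_def] using this

theorem dense_setOf_norm_inner_add_smul_ne_one {w ζ b : E} (hb : ‖b‖ = 1)
    (h : ‖w‖ ^ 2 * (‖ζ‖ ^ 2 - ‖⟪b, ζ⟫_ℂ‖ ^ 2) < 1) : Dense {t : ℂ | ‖⟪w, ζ + t • b⟫_ℂ‖ ≠ 1} := by
  simp only [inner_add_right, inner_smul_right]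
  refine dense_setOf_norm_add_mul_ne one_ne_zero fun hwb hwζ => ?_
  have hle := norm_inner_sq_le_of_inner_eq_zero hb hwb ζ
  rw [hwζ, one_pow] at hle
  exact hle.not_gt h

theorem meetsSlices_capsWithoutWalls {δ R : ℝ} (hδ : 0 < δ) (hRδ : R ^ 2 * (1 - δ ^ 2) < 1)
    (hFR : ∀ w ∈ F, ‖w‖ = R) (hF : ∀ ζ : E, ‖ζ‖ = 1 → ∃ w ∈ F, 1 < ‖⟪w, ζ⟫_ℂ‖) :
    MeetsSlices δ (capsWithoutWalls F) := by
  intro ζ b hζ hb hδb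
  have hdense : Dense (⋂ w ∈ F, {t : ℂ | ‖⟪w, ζ + t • b⟫_ℂ‖ ≠ 1}) := by
    refine dense_biInter_of_isOpen (fun w _ => isOpen_ne_fun (by fun_prop) continuous_const)
      F.countable_toSet fun w hw => dense_setOf_norm_inner_add_smul_ne_one hb ?_
    calc ‖w‖ ^ 2 * (‖ζ‖ ^ 2 - ‖⟪b, ζ⟫_ℂ‖ ^ 2) = R ^ 2 * (1 - ‖⟪b, ζ⟫_ℂ‖ ^ 2) := by
          rw [hFR w hw, hζ, one_pow]
      _ ≤ R ^ 2 * (1 - δ ^ 2) := by gcongr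
      _ < 1 := hRδ
  obtain ⟨w₀, hw₀, hζw₀⟩ := hF ζ hζ
  have hopen : IsOpen {t : ℂ | ‖t‖ < δ ∧ 1 < ‖⟪w₀, ζ + t • b⟫_ℂ‖} :=
    .and (isOpen_lt (by fun_prop) (by fun_prop)) (isOpen_lt (by fun_prop) (by fun_prop))
  have hball : IsOpen {t : ℂ | ‖ζ + t • b‖ < ‖ζ‖} := isOpen_lt (by fun_prop) (by fun_prop)
  have hfreq := frequently_norm_add_smul_lt hb (norm_pos_iff.1 (hδ.trans_le hδb))
  obtain ⟨t, ⟨htball, htδ, htw₀⟩, ht⟩ := hdense.inter_open_nonempty _ (hball.inter hopen)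
    (hfreq.and_eventually (hopen.mem_nhds (by simpa using ⟨hδ, hζw₀⟩))).exists
  refine ⟨t, htδ, ?_, fun w hw => mem_iInter₂.1 ht w hw, w₀, hw₀, htw₀⟩
  rwa [mem_ball_zero_iff, ← hζ]

theorem exists_differentiable_meetsSlices [ProperSpace E] {r δ ε : ℝ} (hr : r < 1) (hδ : 0 < δ)
    (hε : 0 < ε) (C : ℝ) :
    ∃ q : E → ℂ, Differentiable ℂ q ∧ (∀ z ∈ closedBall (0 : E) r, ‖q z‖ ≤ ε) ∧
      MeetsSlices δ {z ∈ ball 0 1 | C ≤ ‖q z‖} := by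
  have hRr : ∀ᶠ R in 𝓝[>] (1 : ℝ), R * r < 1 :=
    ((continuous_mul_const r).tendsto' 1 r (one_mul r) |>.eventually_lt_const hr).filter_mono
      nhdsWithin_le_nhds
  have hRδ : ∀ᶠ R in 𝓝[>] (1 : ℝ), R ^ 2 * (1 - δ ^ 2) < 1 :=
    (Continuous.tendsto' (by fun_prop) 1 (1 - δ ^ 2) (by simp) |>.eventually_lt_const
      (sub_lt_self 1 (pow_pos hδ 2))).filter_mono nhdsWithin_le_nhds
  obtain ⟨R, ⟨hRr, hRδ⟩, hR⟩ := ((hRr.and hRδ).and self_mem_nhdsWithin).exists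
  obtain ⟨F, hFR, hF⟩ := exists_finset_forall_one_lt_norm_inner (E := E) hR
  obtain ⟨K, hKF, hK, hmeets⟩ :=
    (meetsSlices_capsWithoutWalls hδ hRδ hFR hF).exists_isCompact_subset isOpen_capsWithoutWalls
  have hFr (w : E) (hw : w ∈ F) (z : E) (hz : z ∈ closedBall (0 : E) r) : ‖⟪w, z⟫_ℂ‖ < 1 := by
    rw [mem_closedBall_zero_iff] at hz
    calc ‖⟪w, z⟫_ℂ‖ ≤ ‖w‖ * ‖z‖ := norm_inner_le_norm w z
      _ ≤ R * r := by rw [hFR w hw]; gcongr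
      _ < 1 := hRr
  classical
  obtain ⟨q, hq, hqr, hqK⟩ := exists_differentiable_norm_le_and_le_norm
    (F.image fun w z => ⟪w, z⟫_ℂ) (L := closedBall 0 r) (K := K)
    (by simpa using fun w _ => (innerSL ℂ w).differentiable) (isCompact_closedBall 0 r)
    (by simpa using hFr) hK (by simpa using fun w hw z hz => (hKF hz).2.1 w hw)
    (by simpa using fun z hz => (hKF hz).2.2) hε C
  exact ⟨q, hq, hqr, hmeets.mono fun z hz => ⟨(hKF hz).1, hqK z hz⟩⟩

end Caps

section UnboundedSlices

variable {E F : Type*} [NormedAddCommGroup E] [InnerProductSpace ℂ E] [SeminormedAddCommGroup F]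

theorem not_isBoundedUnder_norm_slice {f : E → F}
    (hf : ∀ n : ℕ, MeetsSlices (1 / (n + 1)) {z ∈ ball 0 1 | n < ‖f z‖}) {a b : E} (hb : b ≠ 0)
    (hne : {t : ℂ | a + t • b ∈ ball 0 1}.Nonempty) {t₀ : ℂ} (ht₀ : a + t₀ • b ∈ sphere 0 1) :
    ¬ IsBoundedUnder (· ≤ ·) (𝓝[{t : ℂ | a + t • b ∈ ball 0 1}] t₀)
      fun t => ‖f (a + t • b)‖ := by
  rintro ⟨M, hM⟩
  rw [eventually_map] at hM
  obtain ⟨r, hr, hrM⟩ := Metric.mem_nhdsWithin_iff.1 hM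
  obtain ⟨t₁, ht₁⟩ := hne
  rw [mem_sphere_zero_iff_norm] at ht₀
  have hshift (t : ℂ) : a + t₀ • b + t • b = a + (t₀ + t) • b := by rw [add_smul, add_assoc]
  have hinner : ⟪b, a + t₀ • b⟫_ℂ ≠ 0 := by
    refine inner_ne_zero_of_norm_add_smul_lt (t := t₁ - t₀) ?_
    rw [hshift, add_sub_cancel, ht₀]
    exact mem_ball_zero_iff.1 ht₁
  have hb' : 0 < ‖b‖ := norm_pos_iff.2 hb
  have hlim : Tendsto (fun n : ℕ => 1 / ((n : ℝ) + 1)) atTop (𝓝 0) :=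
    tendsto_one_div_add_atTop_nhds_zero_nat
  obtain ⟨n, ⟨hnM, hnr⟩, hninner⟩ := (((tendsto_natCast_atTop_atTop.eventually_ge_atTop M).and
    (hlim.eventually_le_const (mul_pos hr hb'))).and
    (hlim.eventually_le_const (div_pos (norm_pos_iff.2 hinner) hb'))).exists
  obtain ⟨t, ht, htball, htn⟩ := (hf n).exists_norm_smul_lt ht₀ hb ((le_div_iff₀ hb').1 hninner)
  rw [hshift] at htball htn
  have htr : ‖t‖ < r := by
    rw [norm_smul] at ht
    exact lt_of_mul_lt_mul_right (ht.trans_le hnr) hb'.le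
  have hle : ‖f (a + (t₀ + t) • b)‖ ≤ M := hrM ⟨by simpa using htr, htball⟩
  exact (hnM.trans_lt htn).not_ge hle

end UnboundedSlices

theorem isBoundedUnder_norm_of_eq_on_inter {X F : Type*} [TopologicalSpace X]
    [SeminormedAddCommGroup F] {f g : X → F} {S V W : Set X} {x : X} (hW : IsOpen W) (hxW : x ∈ W)
    (hg : ContinuousOn g (S ∪ W)) (hV : IsOpen V) (hxV : x ∈ V) (h : ∀ y ∈ V ∩ S, g y = f y) :
    IsBoundedUnder (· ≤ ·) (𝓝[S] x) fun y => ‖f y‖ := by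
  have hcont : ContinuousAt g x :=
    hg.continuousAt (mem_of_superset (hW.mem_nhds hxW) subset_union_right)
  refine (hcont.continuousWithinAt.norm.congr' ?_).isBoundedUnder_le
  filter_upwards [inter_mem_nhdsWithin S (hV.mem_nhds hxV)] with y hy
  rw [h y hy.symm]

theorem eventually_forall_dist_dilation_lt {E F : Type*} [NormedAddCommGroup E] [NormedSpace ℝ E]
    [PseudoMetricSpace F] {f : E → F} (hf : ContinuousOn f (ball 0 1)) {K : Set E}
    (hK : IsCompact K) (hKball : K ⊆ ball 0 1) {ε : ℝ} (hε : 0 < ε) :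
    ∀ᶠ s : ℝ in 𝓝[<] 1, ∀ z ∈ K, dist (f (s • z)) (f z) < ε := by
  have hmaps : MapsTo (fun p : ℝ × E => p.1 • p.2) (Ioc 0 1 ×ˢ K) (ball 0 1) := fun p hp => by
    rw [mem_ball_zero_iff, norm_smul, Real.norm_of_nonneg hp.1.1.le]
    exact mul_lt_one_of_nonneg_of_lt_one_right hp.1.2 (norm_nonneg _)
      (mem_ball_zero_iff.1 (hKball hp.2))
  have hcont : ContinuousOn (Function.uncurry fun (s : ℝ) z => f (s • z)) (Ioc 0 1 ×ˢ K) :=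
    hf.comp (by fun_prop) hmaps
  obtain ⟨v, hv, hvε⟩ := hK.mem_uniformity_of_prod hcont (right_mem_Ioc.2 one_pos)
    (dist_mem_uniformity hε)
  have hmem : Ioc (0 : ℝ) 1 ∈ 𝓝[<] 1 := mem_of_superset (Ioo_mem_nhdsLT one_pos) Ioo_subset_Ioc_self
  filter_upwards [nhdsWithin_le_iff.2 hmem hv] with s hs z hz
  simpa using hvε s hs z hz

theorem ResidualIn.mono {X : Type*} [TopologicalSpace X] {S T : Set X} (hS : ResidualIn S)
    (hST : S ⊆ T) : ResidualIn T :=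
  hS.imp fun _ h => ⟨h.1.trans hST, h.2⟩

theorem residualIn_iInter {X ι : Type*} [TopologicalSpace X] [BaireSpace X] [Countable ι]
    {U : ι → Set X} (hopen : ∀ i, IsOpen (U i)) (hdense : ∀ i, Dense (U i)) :
    ResidualIn (⋂ i, U i) :=
  ⟨_, Subset.rfl, .iInter_of_isOpen hopen, dense_iInter_of_isOpen hopen hdense⟩

section LargeOnSlices

variable {N : ℕ}

/-- The holomorphic functions on the unit ball whose norm exceeds `C` somewhere on every slice of
angle at least `δ`, at distance less than `δ` from the boundary point. -/
def largeOnSlices (N : ℕ) (δ C : ℝ) : Set (Hol (ball (0 : EN N) 1)) :=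
  {f | MeetsSlices δ {z ∈ ball 0 1 | C < ‖f.1 z‖}}

theorem isOpen_largeOnSlices (δ C : ℝ) : IsOpen (largeOnSlices N δ C) := by
  refine isOpen_iff_mem_nhds.2 fun f hf => ?_
  obtain ⟨K, hKG, hK, hmeets⟩ := hf.exists_isCompact_subset
    (f.2.continuousOn.norm.isOpen_inter_preimage isOpen_ball isOpen_Ioi)
  have hKball : K ⊆ ball 0 1 := fun z hz => (hKG hz).1
  obtain ⟨A, hA, hAf⟩ :=
    hK.exists_forall_le' (f.2.continuousOn.norm.mono hKball) fun z hz => (hKG hz).2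
  refine (Hol.hasBasis_nhds f).mem_iff.2 ⟨(K, A - C), ⟨⟨hKball, hK⟩, sub_pos.2 hA⟩, fun g hg => ?_⟩
  refine hmeets.mono fun z hz => ⟨hKball hz, ?_⟩
  have hgf : ‖f.1 z - g.1 z‖ < A - C := by simpa [dist_eq_norm_sub'] using hg z hz
  linarith [norm_sub_norm_le (f.1 z) (g.1 z), hAf z hz]

theorem Hol.exists_bounded_forall_dist_lt (f : Hol (ball (0 : EN N) 1)) {K : Set (EN N)}
    (hK : IsCompact K) (hKball : K ⊆ ball 0 1) {ε : ℝ} (hε : 0 < ε) :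
    ∃ g : Hol (ball (0 : EN N) 1), (∃ M, ∀ z ∈ ball 0 1, ‖g.1 z‖ ≤ M) ∧
      ∀ z ∈ K, dist (g.1 z) (f.1 z) < ε := by
  obtain ⟨s, hsK, hs₀, hs₁⟩ := ((eventually_forall_dist_dilation_lt f.2.continuousOn hK hKball
    hε).and (Ioo_mem_nhdsLT one_pos)).exists
  have hmaps : MapsTo (fun z : EN N => s • z) (ball 0 1) (closedBall 0 s) := fun z hz => by
    rw [mem_closedBall_zero_iff, norm_smul, Real.norm_of_nonneg hs₀.le]
    exact mul_le_of_le_one_right hs₀.le (mem_ball_zero_iff.1 hz).le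
  have hsub : closedBall (0 : EN N) s ⊆ ball 0 1 := closedBall_subset_ball hs₁
  obtain ⟨M, hM⟩ := (isCompact_closedBall (0 : EN N) s).exists_bound_of_continuousOn
    (f.2.continuousOn.mono hsub)
  have hdil : DifferentiableOn ℂ (fun z : EN N => f.1 (s • z)) (ball 0 1) :=
    f.2.comp (differentiableOn_id.const_smul s) (hmaps.mono_right hsub)
  exact ⟨⟨_, hdil⟩, ⟨M, fun z hz => hM _ (hmaps hz)⟩, hsK⟩

theorem dense_largeOnSlices {δ : ℝ} (hδ : 0 < δ) (C : ℝ) : Dense (largeOnSlices N δ C) := by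
  refine fun f => (mem_closure_iff_nhds_basis (Hol.hasBasis_nhds f)).2 ?_
  rintro ⟨K, ε⟩ ⟨⟨hKball, hK⟩, hε⟩
  obtain ⟨g, ⟨M, hM⟩, hgf⟩ := Hol.exists_bounded_forall_dist_lt f hK hKball (half_pos hε)
  obtain ⟨r, hr, hKr⟩ := exists_lt_subset_ball hK.isClosed hKball
  obtain ⟨q, hq, hqr, hmeets⟩ :=
    exists_differentiable_meetsSlices (E := EN N) hr hδ (half_pos hε) (C + 1 + M)
  refine ⟨g + ⟨q, hq.differentiableOn⟩, hmeets.mono fun z hz => ⟨hz.1, ?_⟩, fun z hz => ?_⟩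
  · have hsum : ‖q z‖ - ‖g.1 z‖ ≤ ‖g.1 z + q z‖ := by
      linarith [norm_le_add_norm_add' (g.1 z) (q z)]
    change C < ‖g.1 z + q z‖
    linarith [hz.2, hM z hz.1]
  · calc dist (g.1 z + q z) (f.1 z) ≤ dist (g.1 z) (f.1 z) + ‖q z‖ := by
          rw [dist_eq_norm_sub, dist_eq_norm_sub, add_sub_right_comm]
          exact norm_add_le _ _
      _ < ε / 2 + ε / 2 :=
          add_lt_add_of_lt_of_le (hgf z hz) (hqr z (ball_subset_closedBall (hKr hz)))
      _ = ε := add_halves ε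

end LargeOnSlices

theorem nonextendable_slices_residual_general {N : ℕ} :
    ResidualIn {f : Hol (ball (0 : EN N) 1) |
      ∀ a b : EN N, b ≠ 0 → {t : ℂ | a + t • b ∈ ball (0 : EN N) 1}.Nonempty →
        ∀ t₀ : ℂ, a + t₀ • b ∈ sphere (0 : EN N) 1 →
          ¬ IsBoundedUnder (· ≤ ·) (𝓝[{t : ℂ | a + t • b ∈ ball (0 : EN N) 1}] t₀)
            fun t => ‖f.1 (a + t • b)‖} := by
  have := Hol.baireSpace (D := ball (0 : EN N) 1) isOpen_ball
  refine (residualIn_iInter (U := fun n : ℕ => largeOnSlices N (1 / (n + 1)) n)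
    (fun n => isOpen_largeOnSlices _ _)
    fun n => dense_largeOnSlices Nat.one_div_pos_of_nat _).mono fun f hf a b hb hne t₀ ht₀ => ?_
  exact not_isBoundedUnder_norm_slice (mem_iInter.1 hf) hb hne ht₀

/-- **Non-extendability along affine lines.** For `N ≥ 2`, the set of `f ∈ 𝒪(𝔹_N)` such
that for every complex affine line `L = {a + t b : t ∈ ℂ}` meeting `𝔹_N`, the restriction
of `f` to `L ∩ 𝔹_N` extends holomorphically past no boundary point of the disc `L ∩ 𝔹_N`,
is residual in `𝒪(𝔹_N)`. -/
theorem nonextendable_slices_residual {N : ℕ} (hN : 2 ≤ N) :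
    ResidualIn {f : ↥(Hol (Metric.ball (0:EN N) 1)) |
      ∀ a b : EN N, b ≠ 0 → ({t : ℂ | a + t • b ∈ Metric.ball (0:EN N) 1}).Nonempty →
        ∀ t₀ : ℂ, a + t₀ • b ∈ Metric.sphere (0:EN N) 1 →
          ¬ ∃ (W : Set ℂ) (g : ℂ → ℂ), IsOpen W ∧ t₀ ∈ W ∧
            DifferentiableOn ℂ g ({t : ℂ | a + t • b ∈ Metric.ball (0:EN N) 1} ∪ W) ∧
            ∃ V : Set ℂ, IsOpen V ∧ t₀ ∈ V ∧
              ∀ t ∈ V ∩ {t : ℂ | a + t • b ∈ Metric.ball (0:EN N) 1},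
                g t = f.1 (a + t • b)} := by
  exact nonextendable_slices_residual_general.mono
    fun f hf a b hb hne t₀ ht₀ ⟨W, g, hW, ht₀W, hg, V, hV, ht₀V, hgf⟩ => hf a b hb hne t₀ ht₀
      (isBoundedUnder_norm_of_eq_on_inter hW ht₀W hg.continuousOn hV ht₀V hgf)
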